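/- Let f ∈ Γ₀(H), let x ∈ H, and define Φ: [0,+∞) → (−∞,+∞] by Φ(γ) = f(prox_{γ⊙f} x). Then Φ is continuous on [0,+∞) as an extended-real-valued function: for every μ ∈ [0,+∞) and every sequence (γ_n) in [0,+∞) with γ_n → μ, one has Φ(γ_n) → Φ(μ) in (−∞,+∞]. -/

import Mathlib

open scoped Classical

noncomputable section

/-- Effective domain of an extended-real-valued function. -/
def edom {E : Type*} (f : E → EReal) : Set E := {x | f x < ⊤}

/-- Convexity of an extended-real-valued function, via its epigraph. -/
def ConvexEpi {E : Type*} [AddCommGroup E] [Module ℝ E] (f : E → EReal) : Prop :=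
  Convex ℝ {p : E × ℝ | f p.1 ≤ (p.2 : EReal)}

/-- `f ∈ Γ₀(E)`: proper, lower semicontinuous, convex, with values in `(-∞, +∞]`. -/
def IsGamma0 {E : Type*} [AddCommGroup E] [Module ℝ E] [TopologicalSpace E]
    (f : E → EReal) : Prop :=
  (∃ x, f x ≠ ⊤) ∧ (∀ x, f x ≠ ⊥) ∧ LowerSemicontinuous f ∧ ConvexEpi f

/-- Proximity operator: the (unique, for `f ∈ Γ₀`) minimizer of
`y ↦ f y + ‖x - y‖² / 2`. -/
def prox {E : Type*} [NormedAddCommGroup E] [InnerProductSpace ℝ E]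
    (f : E → EReal) (x : E) : E :=
  Classical.epsilon fun p =>
    ∀ y, f p + ((‖x - p‖ ^ 2 / 2 : ℝ) : EReal) ≤ f y + ((‖x - y‖ ^ 2 / 2 : ℝ) : EReal)

/-- Metric projection onto a set. -/
def projC {E : Type*} [NormedAddCommGroup E] (C : Set E) (x : E) : E :=
  Classical.epsilon fun p => p ∈ C ∧ ∀ y ∈ C, ‖x - p‖ ≤ ‖x - y‖

/-- Fenchel conjugate. -/
def fconj {E : Type*} [NormedAddCommGroup E] [InnerProductSpace ℝ E]
    (f : E → EReal) (y : E) : EReal :=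
  ⨆ x, ((inner ℝ x y : ℝ) : EReal) - f x

/-- Plain scalar multiple `ξ·f`. -/
def smulE {E : Type*} (ξ : ℝ) (f : E → EReal) : E → EReal := fun x => (ξ : EReal) * f x

/-- The operation `ξ ⊙ f`: indicator of `cl (dom f)` if `ξ = 0`, and `ξ·f` if `ξ > 0`. -/
def rscale {E : Type*} [TopologicalSpace E] (ξ : ℝ) (f : E → EReal) : E → EReal :=
  if ξ = 0 then fun x => if x ∈ closure (edom f) then (0 : EReal) else ⊤
  else fun x => (ξ : EReal) * f x

/-- `f^∨`: agrees with `f` where `-∞ < f < 0`, and is `+∞` elsewhere. -/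
def pbas {E : Type*} (f : E → EReal) : E → EReal :=
  fun x => if ⊥ < f x ∧ f x < 0 then f x else ⊤

/-- `f^∧`: agrees with `f` where `0 < f < +∞`, and is `+∞` elsewhere. -/
def phaut {E : Type*} (f : E → EReal) : E → EReal :=
  fun x => if 0 < f x ∧ f x < ⊤ then f x else ⊤

/-- `f_▽ = (f^∨)**`. -/
def basEnv {E : Type*} [NormedAddCommGroup E] [InnerProductSpace ℝ E]
    (f : E → EReal) : E → EReal :=
  fconj (fconj (pbas f))

/-- `f_▲ = (f^∧)**`. -/
def hautEnv {E : Type*} [NormedAddCommGroup E] [InnerProductSpace ℝ E]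
    (f : E → EReal) : E → EReal :=
  fconj (fconj (phaut f))

/-- `S = s⁻¹((0, +∞))`. -/
def sdom {G : Type*} (s : G → EReal) : Set G := {v | 0 < s v ∧ s v < ⊤}

/-- The preperspective `φ ⋉ s`, on the Hilbert direct sum `H ⊕ G`. -/
def prePersp {H G : Type*} [NormedAddCommGroup H] [InnerProductSpace ℝ H]
    [NormedAddCommGroup G] [InnerProductSpace ℝ G]
    (φ : H → EReal) (s : G → EReal) : WithLp 2 (H × G) → EReal := fun q =>
  if 0 < s ((WithLp.equiv 2 (H × G)) q).2 ∧ s ((WithLp.equiv 2 (H × G)) q).2 < ⊤ then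
    s ((WithLp.equiv 2 (H × G)) q).2 *
      φ ((s ((WithLp.equiv 2 (H × G)) q).2).toReal⁻¹ • ((WithLp.equiv 2 (H × G)) q).1)
  else ⊤

/-- The perspective `φ ▷ s`: the largest lower semicontinuous convex minorant of the
preperspective `φ ⋉ s`, on the Hilbert direct sum `H ⊕ G`. -/
def persp {H G : Type*} [NormedAddCommGroup H] [InnerProductSpace ℝ H]
    [NormedAddCommGroup G] [InnerProductSpace ℝ G]
    (φ : H → EReal) (s : G → EReal) : WithLp 2 (H × G) → EReal := fun q =>
  sSup {t : EReal | ∃ g : WithLp 2 (H × G) → EReal,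
    LowerSemicontinuous g ∧ ConvexEpi g ∧ (∀ r, g r ≤ prePersp φ s r) ∧ t = g q}

/-- The point `(x, y)` in the Hilbert direct sum `H ⊕ G`. -/
def pairHG {H G : Type*} (x : H) (y : G) : WithLp 2 (H × G) :=
  (WithLp.equiv 2 (H × G)).symm (x, y)

end

/-!
For `g ∈ Γ₀(H)` the objective `y ↦ g y + ‖x - y‖² / 2` is strongly convex, so it grows
quadratically around its minimizer `prox g x`. Write `p c` for `prox (rscale c f) x`. Comparing the
objectives for `b` and `c` at each other's minimizers gives
`‖p b - p c‖² ≤ (c - b) * (f (p b) - f (p c))`. Hence `f ∘ p` is antitone, so it is bounded near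
every `μ > 0`, and the same inequality then makes `p` continuous at `μ`; the minimality
inequalities squeeze `f (p c)` to `f (p μ)`. At `0`, where `f (p 0)` may be `⊤`, comparing `p c`
with points `y ∈ dom f` close to the projection `p 0` of `x` onto the closure of `dom f` gives
`p c → p 0`; lower semicontinuity bounds `f (p c)` from below in the limit, and antitonicity bounds
it from above.
-/

open Filter Topology Set

section ConvexEReal

variable {E : Type*}

lemma mem_edom_iff_exists_le_coe {f : E → EReal} {y : E} :
    y ∈ edom f ↔ ∃ t : ℝ, f y ≤ t := by
  constructor
  · intro hy
    obtain ⟨t, ht, -⟩ := EReal.lt_iff_exists_real_btwn.1 (show f y < ⊤ from hy)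
    exact ⟨t, ht.le⟩
  · rintro ⟨t, ht⟩
    exact ht.trans_lt (EReal.coe_lt_top t)

variable [AddCommGroup E] [Module ℝ E] {f : E → EReal}

lemma ConvexEpi.convex_edom (hf : ConvexEpi f) : Convex ℝ (edom f) := by
  intro y hy z hz a b ha hb hab
  obtain ⟨s, hs⟩ := mem_edom_iff_exists_le_coe.1 hy
  obtain ⟨t, ht⟩ := mem_edom_iff_exists_le_coe.1 hz
  exact mem_edom_iff_exists_le_coe.2 ⟨_, hf (x := (y, s)) hs (y := (z, t)) ht ha hb hab⟩

variable [TopologicalSpace E]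

lemma IsGamma0.edom_nonempty (hf : IsGamma0 f) : (edom f).Nonempty :=
  hf.1.imp fun _ h => lt_top_iff_ne_top.2 h

lemma IsGamma0.ne_bot (hf : IsGamma0 f) (y : E) : f y ≠ ⊥ :=
  hf.2.1 y

lemma IsGamma0.lowerSemicontinuous (hf : IsGamma0 f) : LowerSemicontinuous f :=
  hf.2.2.1

lemma IsGamma0.convexEpi (hf : IsGamma0 f) : ConvexEpi f :=
  hf.2.2.2

lemma IsGamma0.coe_toReal (hf : IsGamma0 f) {y : E} (hy : y ∈ edom f) :
    ((f y).toReal : EReal) = f y :=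
  EReal.coe_toReal hy.ne (hf.ne_bot y)

lemma IsGamma0.convexOn_toReal (hf : IsGamma0 f) :
    ConvexOn ℝ (edom f) fun y => (f y).toReal := by
  have hdom := hf.convexEpi.convex_edom
  refine ⟨hdom, fun y hy z hz a b ha hb hab => ?_⟩
  have hcombo := hf.convexEpi (x := (y, (f y).toReal)) (hf.coe_toReal hy).ge
    (y := (z, (f z).toReal)) (hf.coe_toReal hz).ge ha hb hab
  exact EReal.coe_le_coe_iff.1 ((hf.coe_toReal (hdom hy hz ha hb hab)).trans_le hcombo)

lemma IsGamma0.isClosed_epigraph (hf : IsGamma0 f) :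
    IsClosed {p : E × ℝ | f p.1 ≤ (p.2 : EReal)} :=
  hf.lowerSemicontinuous.isClosed_epigraph.preimage
    (continuous_fst.prodMk (continuous_coe_real_ereal.comp continuous_snd))

lemma IsGamma0.exists_affine_le [IsTopologicalAddGroup E] [ContinuousSMul ℝ E]
    [LocallyConvexSpace ℝ E] (hf : IsGamma0 f) :
    ∃ (ℓ : E →L[ℝ] ℝ) (a : ℝ), ∀ y ∈ edom f, ℓ y + a ≤ (f y).toReal := by
  obtain ⟨z, hz⟩ := hf.edom_nonempty
  have hbelow : (z, (f z).toReal - 1) ∉ {p : E × ℝ | f p.1 ≤ (p.2 : EReal)} := fun h =>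
    absurd (EReal.coe_le_coe_iff.1 ((hf.coe_toReal hz).trans_le h)) (by simp)
  obtain ⟨L, u, hLz, hL⟩ :=
    geometric_hahn_banach_point_closed hf.convexEpi hf.isClosed_epigraph hbelow
  set s : ℝ := L (0, 1)
  have hsplit (y : E) (t : ℝ) : L (y, t) = L (y, 0) + t * s := by
    rw [← smul_eq_mul, ← L.map_smul, ← map_add]
    simp
  have hepi : ∀ y ∈ edom f, u < L (y, 0) + (f y).toReal * s := fun y hy =>
    (hL (y, (f y).toReal) (hf.coe_toReal hy).ge).trans_eq (hsplit y _)
  have hs : 0 < s := by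
    have := hepi z hz
    rw [hsplit] at hLz
    linarith
  refine ⟨-(s⁻¹ • L.comp (.inl ℝ E ℝ)), s⁻¹ * u, fun y hy => ?_⟩
  calc -(s⁻¹ * L (y, 0)) + s⁻¹ * u = s⁻¹ * (u - L (y, 0)) := by ring
    _ ≤ (f y).toReal := (inv_mul_le_iff₀ hs).2 (by linarith [hepi y hy])

lemma IsGamma0.const_mul (hf : IsGamma0 f) {c : ℝ} (hc : 0 < c) :
    IsGamma0 fun y => (c : EReal) * f y := by
  have hc' : (0 : EReal) < c := EReal.coe_pos.2 hc
  refine ⟨hf.1.imp fun z hz => ?_, fun y => ?_, ?_, ?_⟩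
  · simp [EReal.mul_eq_top, hz, hf.ne_bot z]
  · simp [EReal.mul_eq_bot, hf.ne_bot y, hc.le]
  · refine Continuous.comp_lowerSemicontinuous (g := fun t : EReal => (c : EReal) * t) ?_
      hf.lowerSemicontinuous fun s t hst => mul_le_mul_of_nonneg_left hst hc'.le
    exact continuous_iff_continuousAt.2 fun t => EReal.Tendsto.const_mul tendsto_id
      (.inl (EReal.coe_ne_bot c)) (.inl (EReal.coe_ne_top c))
  · have hepi : {p : E × ℝ | (c : EReal) * f p.1 ≤ (p.2 : EReal)} =
        (LinearMap.id.prodMap (c⁻¹ • LinearMap.id) : E × ℝ →ₗ[ℝ] E × ℝ) ⁻¹'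
          {p : E × ℝ | f p.1 ≤ (p.2 : EReal)} := by
      ext ⟨y, t⟩
      change (c : EReal) * f y ≤ t ↔ f y ≤ ((c⁻¹ * t : ℝ) : EReal)
      rw [inv_mul_eq_div, EReal.coe_div, EReal.le_div_iff_mul_le hc' (EReal.coe_ne_top c),
        mul_comm]
    rw [ConvexEpi, hepi]
    exact hf.convexEpi.linear_preimage _

lemma isGamma0_indicator {C : Set E} (hne : C.Nonempty) (hclosed : IsClosed C)
    (hconv : Convex ℝ C) : IsGamma0 fun y => if y ∈ C then (0 : EReal) else ⊤ := by
  refine ⟨hne.imp fun y hy => by simp [hy], fun y => by by_cases hy : y ∈ C <;> simp [hy], ?_, ?_⟩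
  · intro y t ht
    by_cases hy : y ∈ C
    · exact .of_forall fun z => ht.trans_le (by by_cases hz : z ∈ C <;> simp [hy, hz])
    · filter_upwards [hclosed.isOpen_compl.mem_nhds hy] with z hz
      simpa [hy, show z ∉ C from hz] using ht
  · have hepi : {p : E × ℝ | (if p.1 ∈ C then (0 : EReal) else ⊤) ≤ (p.2 : EReal)} =
        C ×ˢ Ici 0 := by
      ext ⟨y, t⟩
      by_cases hy : y ∈ C <;> simp [hy]
    rw [ConvexEpi, hepi]
    exact hconv.prod (convex_Ici 0)

end ConvexEReal

section Rscale

variable {E : Type*} [TopologicalSpace E] {f : E → EReal} {c : ℝ}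

-- Holds where `f y = ±∞` too, because `EReal.toReal` sends both infinities to `0`.
lemma toReal_rscale (c : ℝ) (f : E → EReal) (y : E) :
    (rscale c f y).toReal = c * (f y).toReal := by
  rcases eq_or_ne c 0 with rfl | hc
  · simp only [rscale, if_true, zero_mul]
    split_ifs <;> rfl
  · simp [rscale, hc, EReal.toReal_mul]

lemma edom_rscale_zero (f : E → EReal) : edom (rscale 0 f) = closure (edom f) := by
  ext y
  change rscale 0 f y < ⊤ ↔ y ∈ closure (edom f)
  by_cases hy : y ∈ closure (edom f) <;> simp [rscale, hy]

lemma edom_rscale_of_pos (hc : 0 < c) (f : E → EReal) : edom (rscale c f) = edom f := by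
  ext y
  induction h : f y <;>
    simp [edom, rscale, hc.ne', h, EReal.coe_mul_top_of_pos, EReal.coe_mul_bot_of_pos, hc,
      ← EReal.coe_mul]

lemma edom_subset_edom_rscale (hc : 0 ≤ c) (f : E → EReal) : edom f ⊆ edom (rscale c f) := by
  rcases hc.eq_or_lt with rfl | hc
  · exact subset_closure.trans (edom_rscale_zero f).ge
  · exact (edom_rscale_of_pos hc f).ge

lemma isGamma0_rscale [AddCommGroup E] [Module ℝ E] [IsTopologicalAddGroup E]
    [ContinuousSMul ℝ E] (hf : IsGamma0 f) (hc : 0 ≤ c) : IsGamma0 (rscale c f) := by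
  rcases hc.eq_or_lt with rfl | hc
  · simpa only [rscale, if_true] using isGamma0_indicator hf.edom_nonempty.closure
      isClosed_closure hf.convexEpi.convex_edom.closure
  · simpa only [rscale, if_neg hc.ne'] using hf.const_mul hc

end Rscale

section StrongConvexity

variable {E : Type*} [NormedAddCommGroup E]

lemma cauchySeq_of_strongConvexOn [NormedSpace ℝ E] {s : Set E} {k m : ℝ} {F : E → ℝ}
    (hF : StrongConvexOn s k F) (hk : 0 < k) (hm : ∀ y ∈ s, m ≤ F y) {u : ℕ → E}
    (hu : ∀ n, u n ∈ s) (hlim : Tendsto (fun n => F (u n)) atTop (𝓝 m)) : CauchySeq u := by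
  have hmid (i j : ℕ) : k / 8 * ‖u i - u j‖ ^ 2 ≤ (F (u i) + F (u j)) / 2 - m := by
    have hhalf : (0 : ℝ) ≤ 1 / 2 := by norm_num
    have hmem := hF.1 (hu i) (hu j) hhalf hhalf (by norm_num)
    have hstrong := hF.2 (hu i) (hu j) hhalf hhalf (by norm_num)
    simp only [smul_eq_mul] at hstrong
    linarith [hm _ hmem]
  refine Metric.cauchySeq_iff.2 fun ε hε => ?_
  obtain ⟨N, hN⟩ := eventually_atTop.1
    (hlim.eventually_lt_const (show m < m + k / 8 * ε ^ 2 by simp [hk, hε]))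
  refine ⟨N, fun i hi j hj => ?_⟩
  rw [dist_eq_norm]
  refine lt_of_pow_lt_pow_left₀ 2 hε.le ?_
  refine lt_of_mul_lt_mul_left ?_ (show 0 ≤ k / 8 by positivity)
  linarith [hmid i j, hN i hi, hN j hj]

lemma add_norm_sub_sq_le_of_isMinOn [NormedSpace ℝ E] {s : Set E} {k : ℝ} {F : E → ℝ}
    (hF : StrongConvexOn s k F) {p y : E} (hp : p ∈ s) (hmin : IsMinOn F s p) (hy : y ∈ s) :
    F p + k / 2 * ‖y - p‖ ^ 2 ≤ F y := by
  have hchord : ∀ t ∈ Ioo (0 : ℝ) 1, F p + (1 - t) * (k / 2 * ‖y - p‖ ^ 2) ≤ F y := by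
    rintro t ⟨ht0, ht1⟩
    have hmem := hF.1 hy hp ht0.le (sub_nonneg.2 ht1.le) (by ring)
    have hstrong := hF.2 hy hp ht0.le (sub_nonneg.2 ht1.le) (by ring)
    have hle : F p ≤ t * F y + (1 - t) * F p - t * (1 - t) * (k / 2 * ‖y - p‖ ^ 2) :=
      (isMinOn_iff.1 hmin _ hmem).trans hstrong
    refine le_of_mul_le_mul_left ?_ ht0
    linarith
  have hlim : Tendsto (fun t : ℝ => F p + (1 - t) * (k / 2 * ‖y - p‖ ^ 2)) (𝓝[>] 0)
      (𝓝 (F p + (1 - 0) * (k / 2 * ‖y - p‖ ^ 2))) :=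
    (Continuous.tendsto (by fun_prop) 0).mono_left nhdsWithin_le_nhds
  rw [sub_zero, one_mul] at hlim
  exact le_of_tendsto hlim (eventually_of_mem (Ioo_mem_nhdsGT one_pos) hchord)

theorem exists_forall_le_of_strongConvexOn [NormedSpace ℝ E] [CompleteSpace E] {F : E → EReal}
    {k m : ℝ} (hlsc : LowerSemicontinuous F) (hm : ∀ y, (m : EReal) ≤ F y) (hk : 0 < k)
    (hF : StrongConvexOn (edom F) k fun y => (F y).toReal) : ∃ p, ∀ y, F p ≤ F y := by
  rcases (edom F).eq_empty_or_nonempty with hempty | hne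
  · have htop (y : E) : F y = ⊤ := not_lt_top_iff.1 fun hy => hempty.subset hy
    exact ⟨0, fun y => by simp [htop]⟩
  have hcoe {y : E} (hy : y ∈ edom F) : ((F y).toReal : EReal) = F y :=
    EReal.coe_toReal hy.ne ((EReal.bot_lt_coe m).trans_le (hm y)).ne'
  have hbdd : BddBelow ((fun y => (F y).toReal) '' edom F) :=
    ⟨m, forall_mem_image.2 fun y hy => EReal.coe_le_coe_iff.1 ((hm y).trans_eq (hcoe hy).symm)⟩
  set I := sInf ((fun y => (F y).toReal) '' edom F)
  have hI : ∀ y ∈ edom F, I ≤ (F y).toReal := fun y hy => csInf_le hbdd ⟨y, hy, rfl⟩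
  obtain ⟨v, -, hv, hvmem⟩ := exists_seq_tendsto_sInf (hne.image _) hbdd
  choose u hu huv using hvmem
  obtain rfl : (fun n => (F (u n)).toReal) = v := funext huv
  obtain ⟨p, hp⟩ := cauchySeq_tendsto_of_complete (cauchySeq_of_strongConvexOn hF hk hI hu hv)
  have hvI : Tendsto (fun n => F (u n)) atTop (𝓝 (I : EReal)) := by
    simpa only [hcoe (hu _)] using EReal.tendsto_coe.2 hv
  have hpI : F p ≤ I := by
    by_contra! hlt
    obtain ⟨t, hIt, htp⟩ := exists_between hlt
    obtain ⟨n, hn, hn'⟩ :=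
      ((hp.eventually (hlsc p t htp)).and (hvI.eventually_lt_const hIt)).exists
    exact hn.not_gt hn'
  refine ⟨p, fun y => ?_⟩
  by_cases hy : y ∈ edom F
  · exact hpI.trans ((EReal.coe_le_coe_iff.2 (hI y hy)).trans_eq (hcoe hy))
  · exact le_top.trans_eq (not_lt_top_iff.1 hy).symm

lemma strongConvexOn_add_norm_sub_sq [InnerProductSpace ℝ E] {s : Set E} {F : E → ℝ}
    (hF : ConvexOn ℝ s F) (x : E) : StrongConvexOn s 1 fun y => F y + ‖x - y‖ ^ 2 / 2 := by
  rw [strongConvexOn_iff_convex]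
  have haffine : ConvexOn ℝ s fun y => ‖x‖ ^ 2 / 2 - inner ℝ x y :=
    (convexOn_const _ hF.1).sub ((innerₛₗ ℝ x).concaveOn hF.1)
  refine (hF.add haffine).congr fun y _ => ?_
  simp only [Pi.add_apply, norm_sub_sq_real]
  ring

end StrongConvexity

section Prox

variable {H : Type*} [NormedAddCommGroup H]

/-- The function `y ↦ g y + ‖x - y‖² / 2` minimized by `prox g x`. -/
noncomputable def proxObjective (g : H → EReal) (x y : H) : EReal :=
  g y + ((‖x - y‖ ^ 2 / 2 : ℝ) : EReal)

lemma edom_proxObjective (g : H → EReal) (x : H) : edom (proxObjective g x) = edom g := by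
  ext y
  change proxObjective g x y < ⊤ ↔ g y < ⊤
  induction h : g y <;> simp [proxObjective, h, ← EReal.coe_add]

variable [InnerProductSpace ℝ H] {g : H → EReal} {x y : H}

lemma IsGamma0.toReal_proxObjective (hg : IsGamma0 g) (hy : y ∈ edom g) :
    (proxObjective g x y).toReal = (g y).toReal + ‖x - y‖ ^ 2 / 2 := by
  rw [proxObjective, EReal.toReal_add hy.ne (hg.ne_bot y) (EReal.coe_ne_top _)
    (EReal.coe_ne_bot _), EReal.toReal_coe]

lemma IsGamma0.coe_toReal_proxObjective (hg : IsGamma0 g) (hy : y ∈ edom g) :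
    ((proxObjective g x y).toReal : EReal) = proxObjective g x y := by
  rw [hg.toReal_proxObjective hy, EReal.coe_add, hg.coe_toReal hy, proxObjective]

lemma IsGamma0.strongConvexOn_proxObjective (hg : IsGamma0 g) (x : H) :
    StrongConvexOn (edom (proxObjective g x)) 1 fun y => (proxObjective g x y).toReal := by
  rw [edom_proxObjective]
  have h := strongConvexOn_add_norm_sub_sq hg.convexOn_toReal x
  refine ⟨h.1, fun y hy z hz a b ha hb hab => ?_⟩
  simpa only [hg.toReal_proxObjective, hy, hz, h.1 hy hz ha hb hab]
    using h.2 hy hz ha hb hab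

lemma IsGamma0.lowerSemicontinuous_proxObjective (hg : IsGamma0 g) (x : H) :
    LowerSemicontinuous (proxObjective g x) := by
  refine hg.lowerSemicontinuous.add' (Continuous.lowerSemicontinuous ?_) fun y =>
    EReal.continuousAt_add (.inr (EReal.coe_ne_bot _)) (.inr (EReal.coe_ne_top _))
  exact continuous_coe_real_ereal.comp (by fun_prop)

lemma IsGamma0.exists_coe_le_proxObjective (hg : IsGamma0 g) (x : H) :
    ∃ m : ℝ, ∀ y, (m : EReal) ≤ proxObjective g x y := by
  obtain ⟨ℓ, a, hℓ⟩ := hg.exists_affine_le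
  refine ⟨ℓ x + a - ‖ℓ‖ ^ 2 / 2, fun y => ?_⟩
  by_cases hy : y ∈ edom g
  · rw [← hg.coe_toReal_proxObjective hy, EReal.coe_le_coe_iff, hg.toReal_proxObjective hy]
    have hop : ℓ x - ℓ y ≤ ‖ℓ‖ * ‖x - y‖ := by
      rw [← map_sub]
      exact (le_abs_self _).trans (ℓ.le_opNorm _)
    linarith [hℓ y hy, two_mul_le_add_sq ‖ℓ‖ ‖x - y‖]
  · rw [← edom_proxObjective g x] at hy
    exact le_top.trans_eq (not_lt_top_iff.1 hy).symm

variable [CompleteSpace H]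

theorem IsGamma0.proxObjective_prox_le (hg : IsGamma0 g) (x y : H) :
    proxObjective g x (prox g x) ≤ proxObjective g x y := by
  obtain ⟨m, hm⟩ := hg.exists_coe_le_proxObjective x
  exact Classical.epsilon_spec (exists_forall_le_of_strongConvexOn
    (hg.lowerSemicontinuous_proxObjective x) hm one_pos (hg.strongConvexOn_proxObjective x)) y

lemma IsGamma0.prox_mem_edom (hg : IsGamma0 g) (x : H) : prox g x ∈ edom g := by
  obtain ⟨z, hz⟩ := hg.edom_nonempty
  rw [← edom_proxObjective g x] at hz ⊢
  exact (hg.proxObjective_prox_le x z).trans_lt hz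

theorem IsGamma0.toReal_prox_add_le (hg : IsGamma0 g) (x : H) (hy : y ∈ edom g) :
    (g (prox g x)).toReal + ‖x - prox g x‖ ^ 2 / 2 + ‖y - prox g x‖ ^ 2 / 2 ≤
      (g y).toReal + ‖x - y‖ ^ 2 / 2 := by
  have hp := hg.prox_mem_edom x
  have hmin : IsMinOn (fun z => (proxObjective g x z).toReal) (edom (proxObjective g x))
      (prox g x) := isMinOn_iff.2 fun z hz => by
    rw [edom_proxObjective] at hz
    rw [← EReal.coe_le_coe_iff, hg.coe_toReal_proxObjective hp, hg.coe_toReal_proxObjective hz]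
    exact hg.proxObjective_prox_le x z
  have hgrowth := add_norm_sub_sq_le_of_isMinOn (hg.strongConvexOn_proxObjective x)
    ((edom_proxObjective g x).ge hp) hmin ((edom_proxObjective g x).ge hy)
  rw [hg.toReal_proxObjective hp, hg.toReal_proxObjective hy] at hgrowth
  linarith

end Prox

section ProxPath

lemma tendsto_of_norm_sub_sq_tendsto_zero {ι E : Type*} [SeminormedAddCommGroup E] {u : ι → E}
    {a : E} {l : Filter ι} (h : Tendsto (fun i => ‖u i - a‖ ^ 2) l (𝓝 0)) :
    Tendsto u l (𝓝 a) :=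
  tendsto_iff_norm_sub_tendsto_zero.2 (by simpa using h.sqrt)

variable {H : Type*} [NormedAddCommGroup H] [InnerProductSpace ℝ H]

/-- The proximal path `c ↦ prox_{c⊙f} x`. -/
noncomputable def proxPath (f : H → EReal) (x : H) (c : ℝ) : H :=
  prox (rscale c f) x

variable [CompleteSpace H] {f : H → EReal} {b c μ : ℝ}

lemma IsGamma0.proxPath_mem_edom (hf : IsGamma0 f) (x : H) (hc : 0 < c) :
    proxPath f x c ∈ edom f :=
  (edom_rscale_of_pos hc f).le ((isGamma0_rscale hf hc.le).prox_mem_edom x)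

lemma IsGamma0.proxPath_zero_mem_closure (hf : IsGamma0 f) (x : H) :
    proxPath f x 0 ∈ closure (edom f) :=
  (edom_rscale_zero f).le ((isGamma0_rscale hf le_rfl).prox_mem_edom x)

-- At `c = 0` the point `proxPath f x 0` may lie outside `edom f`; the factor `c` then removes the
-- meaningless value of `EReal.toReal`.
lemma IsGamma0.proxPath_add_le (hf : IsGamma0 f) (x : H) (hc : 0 ≤ c) {y : H}
    (hy : y ∈ edom f) :
    c * (f (proxPath f x c)).toReal + ‖x - proxPath f x c‖ ^ 2 / 2
      + ‖y - proxPath f x c‖ ^ 2 / 2 ≤ c * (f y).toReal + ‖x - y‖ ^ 2 / 2 := by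
  simpa only [proxPath, toReal_rscale] using
    (isGamma0_rscale hf hc).toReal_prox_add_le x (edom_subset_edom_rscale hc f hy)

lemma IsGamma0.norm_proxPath_sub_sq_le (hf : IsGamma0 f) (x : H) (hb : 0 ≤ b) (hc : 0 ≤ c)
    (hpb : proxPath f x b ∈ edom f) (hpc : proxPath f x c ∈ edom f) :
    ‖proxPath f x b - proxPath f x c‖ ^ 2 ≤
      (c - b) * ((f (proxPath f x b)).toReal - (f (proxPath f x c)).toReal) := by
  have hmin_b := hf.proxPath_add_le x hb hpc
  have hmin_c := hf.proxPath_add_le x hc hpb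
  rw [norm_sub_rev (proxPath f x c)] at hmin_b
  linarith

theorem IsGamma0.antitoneOn_comp_proxPath (hf : IsGamma0 f) (x : H) :
    AntitoneOn (fun c => f (proxPath f x c)) (Ici 0) := by
  intro b hb c hc hbc
  rcases hbc.eq_or_lt with rfl | hlt
  · exact le_rfl
  by_cases hpb : proxPath f x b ∈ edom f
  · have hpc := hf.proxPath_mem_edom x (hb.trans_lt hlt)
    have hdist := hf.norm_proxPath_sub_sq_le x hb hc hpb hpc
    change f (proxPath f x c) ≤ f (proxPath f x b)
    rw [← hf.coe_toReal hpb, ← hf.coe_toReal hpc, EReal.coe_le_coe_iff]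
    exact sub_nonneg.1 (nonneg_of_mul_nonneg_right ((sq_nonneg _).trans hdist) (sub_pos.2 hlt))
  · exact le_top.trans_eq (not_lt_top_iff.1 hpb).symm

lemma IsGamma0.toReal_proxPath_le (hf : IsGamma0 f) (x : H) (hb : 0 < b) (hbc : b ≤ c) :
    (f (proxPath f x c)).toReal ≤ (f (proxPath f x b)).toReal :=
  EReal.toReal_le_toReal (hf.antitoneOn_comp_proxPath x hb.le (hb.le.trans hbc) hbc)
    (hf.ne_bot _) (hf.proxPath_mem_edom x hb).ne

lemma IsGamma0.norm_proxPath_sub_proxPath_zero_sq_le (hf : IsGamma0 f) (x : H) (hc : 0 < c)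
    (hc1 : c ≤ 1) {y : H} (hy : y ∈ edom f) :
    ‖proxPath f x c - proxPath f x 0‖ ^ 2 ≤
      ‖x - y‖ ^ 2 - ‖x - proxPath f x 0‖ ^ 2 +
        2 * c * ((f y).toReal - (f (proxPath f x 1)).toReal) := by
  have hmin_zero := hf.proxPath_add_le x le_rfl (hf.proxPath_mem_edom x hc)
  have hmin_c := hf.proxPath_add_le x hc.le hy
  have hanti := mul_le_mul_of_nonneg_left (hf.toReal_proxPath_le x hc hc1) hc.le
  linarith [sq_nonneg ‖y - proxPath f x c‖]

lemma IsGamma0.continuousAt_proxPath (hf : IsGamma0 f) (x : H) (hμ : 0 < μ) :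
    ContinuousAt (proxPath f x) μ := by
  set M := (f (proxPath f x (μ / 2))).toReal - (f (proxPath f x (2 * μ))).toReal
  have hbound : ∀ᶠ c in 𝓝 μ, ‖proxPath f x c - proxPath f x μ‖ ^ 2 ≤ |μ - c| * M := by
    filter_upwards [Icc_mem_nhds (half_lt_self hμ) (lt_two_mul_self hμ)] with c ⟨hc₁, hc₂⟩
    have hc : 0 < c := (half_pos hμ).trans_le hc₁
    calc ‖proxPath f x c - proxPath f x μ‖ ^ 2
        ≤ (μ - c) * ((f (proxPath f x c)).toReal - (f (proxPath f x μ)).toReal) :=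
          hf.norm_proxPath_sub_sq_le x hc.le hμ.le (hf.proxPath_mem_edom x hc)
            (hf.proxPath_mem_edom x hμ)
      _ ≤ |μ - c| * |(f (proxPath f x c)).toReal - (f (proxPath f x μ)).toReal| := by
          rw [← abs_mul]
          exact le_abs_self _
      _ ≤ |μ - c| * M := by
          gcongr
          exact abs_sub_le_of_le_of_le
            (hf.toReal_proxPath_le x hc hc₂)
            (hf.toReal_proxPath_le x (half_pos hμ) hc₁)
            (hf.toReal_proxPath_le x hμ (lt_two_mul_self hμ).le)
            (hf.toReal_proxPath_le x (half_pos hμ) (half_lt_self hμ).le)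
  have hlim : Tendsto (fun c => |μ - c| * M) (𝓝 μ) (𝓝 0) := by
    have hcont : Continuous fun c : ℝ => |μ - c| * M := by fun_prop
    simpa using hcont.tendsto μ
  exact tendsto_of_norm_sub_sq_tendsto_zero
    (squeeze_zero' (.of_forall fun _ => sq_nonneg _) hbound hlim)

lemma IsGamma0.continuousWithinAt_proxPath_zero (hf : IsGamma0 f) (x : H) :
    ContinuousWithinAt (proxPath f x) (Ici 0) 0 := by
  refine continuousWithinAt_Ioi_iff_Ici.1 (tendsto_of_norm_sub_sq_tendsto_zero (tendsto_order.2
    ⟨fun a ha => .of_forall fun _ => ha.trans_le (sq_nonneg _), fun ε hε => ?_⟩))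
  obtain ⟨y, hxy, hy⟩ : ∃ y, ‖x - y‖ ^ 2 < ‖x - proxPath f x 0‖ ^ 2 + ε ∧ y ∈ edom f := by
    have hcont : Continuous fun y => ‖x - y‖ ^ 2 := by fun_prop
    exact mem_closure_iff_nhds.1 (hf.proxPath_zero_mem_closure x) _
      (hcont.continuousAt.eventually_lt_const (lt_add_of_pos_right _ hε))
  set B : ℝ → ℝ := fun c => ‖x - y‖ ^ 2 - ‖x - proxPath f x 0‖ ^ 2 +
    2 * c * ((f y).toReal - (f (proxPath f x 1)).toReal) with hB
  have hBcont : Continuous B := by fun_prop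
  have hB0 : B 0 < ε := by
    simp only [hB]
    linarith
  filter_upwards [Ioc_mem_nhdsGT one_pos,
    nhdsWithin_le_nhds (hBcont.continuousAt.eventually_lt_const hB0)] with c ⟨hc, hc1⟩ hBc
  exact (hf.norm_proxPath_sub_proxPath_zero_sq_le x hc hc1 hy).trans_lt hBc

lemma IsGamma0.toReal_proxPath_le_add (hf : IsGamma0 f) (x : H) (hb : 0 < b) (hc : 0 < c) :
    (f (proxPath f x c)).toReal ≤ (f (proxPath f x b)).toReal +
      (‖x - proxPath f x b‖ ^ 2 / 2 - ‖x - proxPath f x c‖ ^ 2 / 2) / c := by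
  rw [← sub_le_iff_le_add', le_div_iff₀ hc]
  linarith [hf.proxPath_add_le x hc.le (hf.proxPath_mem_edom x hb),
    sq_nonneg ‖proxPath f x b - proxPath f x c‖]

lemma IsGamma0.continuousAt_comp_proxPath (hf : IsGamma0 f) (x : H) (hμ : 0 < μ) :
    ContinuousAt (fun c => f (proxPath f x c)) μ := by
  have hcont : ContinuousAt (fun c => ‖x - proxPath f x c‖ ^ 2 / 2) μ := by
    have := hf.continuousAt_proxPath x hμ
    fun_prop
  have hpos : ∀ᶠ c in 𝓝 μ, 0 < c := lt_mem_nhds hμ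
  have hlower := (tendsto_const_nhds (x := (f (proxPath f x μ)).toReal)).sub
    ((hcont.tendsto.sub_const (‖x - proxPath f x μ‖ ^ 2 / 2)).div_const μ)
  have hupper := (tendsto_const_nhds (x := (f (proxPath f x μ)).toReal)).add
    ((hcont.tendsto.const_sub (‖x - proxPath f x μ‖ ^ 2 / 2)).div tendsto_id hμ.ne')
  simp only [sub_self, zero_div, sub_zero, add_zero] at hlower hupper
  have hreal : ContinuousAt (fun c => (f (proxPath f x c)).toReal) μ := by
    refine tendsto_of_tendsto_of_tendsto_of_le_of_le' hlower hupper ?_ ?_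
    · filter_upwards [hpos] with c hc
      exact sub_le_iff_le_add.2 (hf.toReal_proxPath_le_add x hc hμ)
    · filter_upwards [hpos] with c hc
      exact hf.toReal_proxPath_le_add x hμ hc
  exact (continuous_coe_real_ereal.continuousAt.comp hreal).congr
    (hpos.mono fun c hc => hf.coe_toReal (hf.proxPath_mem_edom x hc))

lemma IsGamma0.continuousWithinAt_comp_proxPath_zero (hf : IsGamma0 f) (x : H) :
    ContinuousWithinAt (fun c => f (proxPath f x c)) (Ici 0) 0 := by
  refine tendsto_order.2 ⟨fun t ht => ?_, fun t ht => ?_⟩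
  · exact (hf.continuousWithinAt_proxPath_zero x).eventually (hf.lowerSemicontinuous _ t ht)
  · filter_upwards [self_mem_nhdsWithin] with c hc
    exact (hf.antitoneOn_comp_proxPath x self_mem_Ici hc hc).trans_lt ht

theorem IsGamma0.continuousOn_comp_proxPath (hf : IsGamma0 f) (x : H) :
    ContinuousOn (fun c => f (proxPath f x c)) (Ici 0) := by
  intro μ hμ
  rcases (mem_Ici.1 hμ).eq_or_lt with rfl | hμ
  · exact hf.continuousWithinAt_comp_proxPath_zero x
  · exact (hf.continuousAt_comp_proxPath x hμ).continuousWithinAt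

end ProxPath

/-- Lemma 3.3(iii). `γ ↦ f(prox_{γ⊙f} x)` is continuous on `[0, +∞)`. -/
theorem stmt6 {H : Type*} [NormedAddCommGroup H] [InnerProductSpace ℝ H] [CompleteSpace H]
    (f : H → EReal) (hf : IsGamma0 f) (x : H) (μ : ℝ) (hμ : 0 ≤ μ)
    (γ : ℕ → ℝ) (hγ : ∀ n, 0 ≤ γ n) (hlim : Filter.Tendsto γ Filter.atTop (nhds μ)) :
    Filter.Tendsto (fun n => f (prox (rscale (γ n) f) x)) Filter.atTop
      (nhds (f (prox (rscale μ f) x))) :=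
  (hf.continuousOn_comp_proxPath x μ hμ).tendsto.comp
    (tendsto_nhdsWithin_iff.2 ⟨hlim, .of_forall hγ⟩)
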